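/- arXiv:2104.00715 — 3 statements merged into one kernel-verified Lean document; each statement's English description precedes it below -/
import Mathlib

section
/- If V and W are graded representations of a finite group Γ that are both strongly equivariantly log concave, then the graded representation V ⊗ W, with (V⊗W)^m = ⊕_{p+q=m} V^p ⊗ W^q, is strongly equivariantly log concave. -/
open CategoryTheory MonoidalCategory

noncomputable section

/-- The external direct sum of a finite family of representations. -/
def Representation.pi' {k G : Type*} [CommSemiring k] [Monoid G] {ι : Type*}
    {M : ι → Type*} [∀ i, AddCommMonoid (M i)] [∀ i, Module k (M i)]
    (ρ : ∀ i, Representation k G (M i)) : Representation k G (∀ i, M i) where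
  toFun g := LinearMap.pi fun i => (ρ i g) ∘ₗ LinearMap.proj i
  map_one' := by ext; simp
  map_mul' g h := by ext; simp

variable {G : Type} [Group G] [Fintype G]

/-- `X` is isomorphic to a subrepresentation of `Y`. -/
def IsSubrep (X Y : FDRep ℚ G) : Prop := ∃ f : X ⟶ Y, Mono f

/-- A graded representation is strongly equivariantly log concave if `V^i ⊗ V^l` is
isomorphic to a subrepresentation of `V^j ⊗ V^k` whenever `i ≤ j ≤ k ≤ l` and
`j + k = i + l`. -/
def StrongELC (V : ℕ → FDRep ℚ G) : Prop :=
  ∀ i j k l : ℕ, i ≤ j → j ≤ k → k ≤ l → j + k = i + l →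
    IsSubrep (V i ⊗ V l) (V j ⊗ V k)

/-- The degree-`m` piece `⊕_{p+q=m} V^p ⊗ W^q` of the tensor product of two graded
representations. -/
def gradedTensor (V W : ℕ → FDRep ℚ G) (m : ℕ) : FDRep ℚ G :=
  FDRep.of (Representation.pi' fun p : Fin (m + 1) =>
    Representation.tprod (V p).ρ (W (m - (p : ℕ))).ρ)

namespace ELCAux

open Representation

/-! ### The algebra: a two-row Cauchy–Binet formula with values in a positive cone -/

section Algebra

variable {R : Type*} [CommRing R]

theorem cauchyBinet_mem (P : AddSubmonoid R) (hmul : ∀ x ∈ P, ∀ y ∈ P, x * y ∈ P)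
    (u₁ u₂ v₁ v₂ : ℕ → R)
    (hu : ∀ y y', y < y' → u₁ y * u₂ y' - u₁ y' * u₂ y ∈ P)
    (hv : ∀ y y', y < y' → v₁ y * v₂ y' - v₁ y' * v₂ y ∈ P) (N : ℕ) :
    (∑ y ∈ Finset.range N, u₁ y * v₁ y) * (∑ y ∈ Finset.range N, u₂ y * v₂ y)
      - (∑ y ∈ Finset.range N, u₁ y * v₂ y) * (∑ y ∈ Finset.range N, u₂ y * v₁ y) ∈ P := by
  induction N with
  | zero => simp
  | succ N ih =>
    have key : ∑ y ∈ Finset.range N, (u₁ y * u₂ N - u₁ N * u₂ y) * (v₁ y * v₂ N - v₁ N * v₂ y)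
        ∈ P := by
      refine sum_mem fun y hy => hmul _ (hu _ _ ?_) _ (hv _ _ ?_) <;> simpa using hy
    have e : ∑ y ∈ Finset.range N, (u₁ y * u₂ N - u₁ N * u₂ y) * (v₁ y * v₂ N - v₁ N * v₂ y)
        = (∑ y ∈ Finset.range N, u₁ y * v₁ y) * (u₂ N * v₂ N)
          - (∑ y ∈ Finset.range N, u₁ y * v₂ y) * (u₂ N * v₁ N)
          - (∑ y ∈ Finset.range N, u₂ y * v₁ y) * (u₁ N * v₂ N)
          + (∑ y ∈ Finset.range N, u₂ y * v₂ y) * (u₁ N * v₁ N) := by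
      simp only [Finset.sum_mul, ← Finset.sum_sub_distrib, ← Finset.sum_add_distrib]
      exact Finset.sum_congr rfl fun y _ => by ring
    have := P.add_mem ih key
    rw [e] at this
    simp only [Finset.sum_range_succ]
    convert this using 1
    ring

/-- Entries of the Toeplitz matrix of a sequence. -/
def toep (a : ℕ → R) (x y : ℕ) : R := if y ≤ x then a (x - y) else 0

theorem toep_minor_mem (P : AddSubmonoid R) (hmul : ∀ x ∈ P, ∀ y ∈ P, x * y ∈ P)
    (a : ℕ → R) (ha : ∀ i, a i ∈ P)
    (h : ∀ i j k l : ℕ, i ≤ j → j ≤ k → k ≤ l → j + k = i + l → a j * a k - a i * a l ∈ P)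
    (x₁ x₂ y₁ y₂ : ℕ) (hx : x₁ ≤ x₂) (hy : y₁ ≤ y₂) :
    toep a x₁ y₁ * toep a x₂ y₂ - toep a x₁ y₂ * toep a x₂ y₁ ∈ P := by
  have t : ∀ x y, toep a x y ∈ P := by
    intro x y
    unfold toep
    split_ifs
    · exact ha _
    · exact P.zero_mem
  by_cases h1 : y₂ ≤ x₁
  · have e1 : y₁ ≤ x₁ := by omega
    have e2 : y₂ ≤ x₂ := by omega
    have e3 : y₁ ≤ x₂ := by omega
    simp only [toep, h1, e1, e2, e3, if_true]
    rcases le_total (x₁ - y₁) (x₂ - y₂) with h2 | h2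
    · exact h _ _ _ _ (by omega) h2 (by omega) (by omega)
    · rw [mul_comm (a (x₁ - y₁))]
      exact h _ _ _ _ (by omega) h2 (by omega) (by omega)
  · have : toep a x₁ y₂ = 0 := by simp [toep, h1]
    rw [this, zero_mul, sub_zero]
    exact hmul _ (t _ _) _ (t _ _)

theorem conv_eq (a b : ℕ → R) (N x z m : ℕ) (hx : x < N) (hm : m + z = x) :
    ∑ y ∈ Finset.range N, toep a x y * toep b y z
      = ∑ p ∈ Finset.range (m + 1), a p * b (m - p) := by
  symm
  apply Finset.sum_of_injOn (fun p => x - p)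
  · intro p hp q hq hpq
    simp at hp hq hpq
    omega
  · intro p hp
    simp at hp ⊢
    omega
  · intro y hy hy'
    unfold toep
    by_cases h1 : y ≤ x
    · by_cases h2 : z ≤ y
      · exfalso
        apply hy'
        simp only [Finset.coe_range, Set.mem_image, Set.mem_Iio]
        exact ⟨x - y, by omega, by omega⟩
      · simp [h2]
    · simp [h1]
  · intro p hp
    simp only [Finset.mem_range] at hp
    have h1 : x - (x - p) = p := by omega
    have h2 : x - p - z = m - p := by omega
    have h3 : z ≤ x - p := by omega
    simp [toep, h1, h2, h3]

theorem conv_mem (P : AddSubmonoid R) (hmul : ∀ x ∈ P, ∀ y ∈ P, x * y ∈ P)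
    (a b c : ℕ → R) (ha : ∀ i, a i ∈ P) (hb : ∀ i, b i ∈ P)
    (hc : ∀ m, c m = ∑ p ∈ Finset.range (m + 1), a p * b (m - p))
    (h : ∀ i j k l : ℕ, i ≤ j → j ≤ k → k ≤ l → j + k = i + l → a j * a k - a i * a l ∈ P)
    (h' : ∀ i j k l : ℕ, i ≤ j → j ≤ k → k ≤ l → j + k = i + l → b j * b k - b i * b l ∈ P)
    (i j k l : ℕ) (hij : i ≤ j) (hjk : j ≤ k) (hkl : k ≤ l) (hs : j + k = i + l) :
    c j * c k - c i * c l ∈ P := by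
  have := cauchyBinet_mem P hmul (toep a j) (toep a l) (fun y => toep b y 0)
    (fun y => toep b y (j - i))
    (fun y y' hy => toep_minor_mem P hmul a ha h j l y y' (by omega) hy.le)
    (fun y y' hy => by
      have := toep_minor_mem P hmul b hb h' y y' 0 (j - i) hy.le (by omega)
      rwa [mul_comm (toep b y (j - i))] at this) (l + 1)
  rw [conv_eq a b (l + 1) j 0 j (by omega) (by omega),
    conv_eq a b (l + 1) l (j - i) k (by omega) (by omega),
    conv_eq a b (l + 1) j (j - i) i (by omega) (by omega),
    conv_eq a b (l + 1) l 0 l (by omega) (by omega)] at this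
  simpa only [hc] using this

end Algebra

/-! ### Characters -/

section Characters

variable {M N : Type} [AddCommGroup M] [Module ℚ M] [FiniteDimensional ℚ M]
  [AddCommGroup N] [Module ℚ N] [FiniteDimensional ℚ N]

theorem char_prod (ρ : Representation ℚ G M) (σ : Representation ℚ G N) :
    (ρ.prod σ).character = ρ.character + σ.character := by
  ext g
  exact LinearMap.trace_prodMap' (ρ g) (σ g)

theorem char_pi {ι : Type} [Fintype ι] {M : ι → Type} [∀ i, AddCommGroup (M i)]
    [∀ i, Module ℚ (M i)] [∀ i, FiniteDimensional ℚ (M i)]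
    (ρ : ∀ i, Representation ℚ G (M i)) :
    (Representation.pi' ρ).character = ∑ i, (ρ i).character := by
  classical
  ext g
  simp only [Representation.character, Finset.sum_apply]
  have e : (Representation.pi' ρ) g
      = ∑ i, (LinearMap.single ℚ M i) ∘ₗ ((ρ i g) ∘ₗ LinearMap.proj i) := by
    ext i x j
    simp [Representation.pi', Finset.sum_apply]
  rw [e, map_sum]
  refine Finset.sum_congr rfl fun i _ => ?_
  rw [LinearMap.trace_comp_comm']
  congr 1
  ext x
  simp

/-- Maschke: every subrepresentation splits off. -/
theorem exists_split (ρ : Representation ℚ G M) (σ : Subrepresentation ρ) :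
    ∃ τ : Subrepresentation ρ, ∃ e : (σ.toRepresentation.prod τ.toRepresentation).Equiv ρ,
      ∀ a b, e (a, b) = (a : M) + b := by
  have : NeZero (Nat.card G : ℚ) := ⟨by exact_mod_cast Nat.card_pos.ne'⟩
  obtain ⟨τ, hτ⟩ := exists_isCompl σ
  have h : IsCompl σ.toSubmodule τ.toSubmodule := by
    rw [isCompl_iff, disjoint_iff, codisjoint_iff] at hτ ⊢
    exact ⟨congrArg Subrepresentation.toSubmodule hτ.1,
      congrArg Subrepresentation.toSubmodule hτ.2⟩
  refine ⟨τ, Representation.Equiv.mk (Submodule.prodEquivOfIsCompl _ _ h) ?_, ?_⟩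
  · intro g
    apply LinearMap.ext
    rintro ⟨a, b⟩
    simp [Representation.prod, Subrepresentation.toRepresentation]
  · intro a b
    simp

theorem exists_inj_of_char {M N K : Type} [AddCommGroup M] [Module ℚ M] [FiniteDimensional ℚ M]
    [AddCommGroup N] [Module ℚ N] [FiniteDimensional ℚ N]
    [AddCommGroup K] [Module ℚ K] [FiniteDimensional ℚ K]
    (ρ : Representation ℚ G M) (σ : Representation ℚ G N) (τ : Representation ℚ G K)
    (h : σ.character = ρ.character + τ.character) :
    ∃ f : IntertwiningMap ρ σ, Function.Injective f := by
  induction hn : Module.finrank ℚ M using Nat.strong_induction_on generalizing M N with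
  | _ n ih =>
  subst hn
  by_cases hM : Subsingleton M
  · exact ⟨0, Function.injective_of_subsingleton _⟩
  have hc : (Nat.card G : ℚ) ≠ 0 := by exact_mod_cast Nat.card_pos.ne'
  let _ : Invertible (Nat.card G : ℚ) := invertibleOfNonzero hc
  -- a nonzero intertwining map
  obtain ⟨f, hf⟩ : ∃ f : IntertwiningMap ρ σ, f ≠ 0 := by
    have h1 := card_inv_mul_sum_char_mul_char_eq_finrank ρ σ
    have h2 := card_inv_mul_sum_char_mul_char_eq_finrank ρ ρ
    have h3 := card_inv_mul_sum_char_mul_char_eq_finrank ρ τ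
    have h4 : Module.finrank ℚ (IntertwiningMap ρ σ)
        = Module.finrank ℚ (IntertwiningMap ρ ρ) + Module.finrank ℚ (IntertwiningMap ρ τ) := by
      have : (Module.finrank ℚ (IntertwiningMap ρ σ) : ℚ)
        = Module.finrank ℚ (IntertwiningMap ρ ρ) + Module.finrank ℚ (IntertwiningMap ρ τ) := by
        rw [← h1, ← h2, ← h3, h]
        simp only [Pi.add_apply, add_mul, Finset.sum_add_distrib, mul_add]
      exact_mod_cast this
    have h5 : 0 < Module.finrank ℚ (IntertwiningMap ρ ρ) := by
      rw [Module.finrank_pos_iff]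
      refine ⟨⟨0, IntertwiningMap.id ρ, fun h0 => hM ⟨fun a b => ?_⟩⟩⟩
      have ha := congrArg (fun t : IntertwiningMap ρ ρ => t a) h0
      have hb := congrArg (fun t : IntertwiningMap ρ ρ => t b) h0
      simp at ha hb
      rw [← ha, ← hb]
    have h6 : 0 < Module.finrank ℚ (IntertwiningMap ρ σ) := by omega
    rw [Module.finrank_pos_iff] at h6
    exact exists_ne 0
  obtain ⟨C, e, he⟩ := exists_split ρ f.ker
  obtain ⟨D, e', he'⟩ := exists_split σ f.range
  have hfC : ∀ c : C.toSubmodule, f c = 0 → c = 0 := by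
    intro c hc0
    have h1 : e (⟨c, hc0⟩, 0) = e (0, c) := by simp [he]
    have h2 := e.injective h1
    exact (congrArg Prod.snd h2).symm
  have hmap : ∀ v, f v ∈ f.range.toSubmodule := fun v => ⟨v, rfl⟩
  -- `C` is isomorphic to the range
  let φ : IntertwiningMap C.toRepresentation f.range.toRepresentation :=
    ⟨(f.toLinearMap.comp C.toSubmodule.subtype).codRestrict f.range.toSubmodule
      (fun c => hmap c), by
        intro g
        ext c
        simp [Subrepresentation.toRepresentation]
        exact IntertwiningMap.isIntertwining ρ σ f g _⟩
  have hφ : ∀ c, (φ c : N) = f c := fun c => rfl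
  have hφb : Function.Bijective φ := by
    constructor
    · rw [injective_iff_map_eq_zero]
      intro c hc0
      apply hfC
      rw [← hφ, hc0]
      rfl
    · rintro ⟨w, v, rfl⟩
      obtain ⟨⟨a, c⟩, rfl⟩ := e.surjective v
      refine ⟨c, Subtype.ext ?_⟩
      rw [hφ]
      have : f (a : M) = 0 := a.2
      simp [he, this]
  have c1 := char_iso e
  have c2 := char_iso e'
  have c3 := char_iso (IntertwiningMap.ofBijective φ hφb)
  rw [char_prod] at c1 c2
  have hlt : Module.finrank ℚ f.ker.toSubmodule < Module.finrank ℚ M := by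
    apply Submodule.finrank_lt
    intro htop
    apply hf
    ext v
    have : v ∈ f.ker.toSubmodule := by rw [htop]; trivial
    exact this
  obtain ⟨ψ, hψ⟩ := ih _ hlt f.ker.toRepresentation D.toRepresentation (by
    have : f.range.toRepresentation.character + D.toRepresentation.character
      = f.range.toRepresentation.character
        + (f.ker.toRepresentation.character + τ.character) := by
      rw [c2, h, ← c1, c3]; abel
    exact add_left_cancel this) rfl
  -- assemble
  let A : IntertwiningMap (f.ker.toRepresentation.prod C.toRepresentation)
      (f.range.toRepresentation.prod D.toRepresentation) :=
    IntertwiningMap.prod (φ.comp (IntertwiningMap.snd ℚ _ _))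
      (ψ.comp (IntertwiningMap.fst ℚ _ _))
  have hA : Function.Injective A := by
    rintro ⟨a, b⟩ ⟨a', b'⟩ hab
    have h1 : φ b = φ b' := congrArg Prod.fst hab
    have h2 : ψ a = ψ a' := congrArg Prod.snd hab
    rw [hφb.1 h1, hψ h2]
  refine ⟨e'.toIntertwiningMap.comp (A.comp e.symm.toIntertwiningMap), ?_⟩
  exact e'.injective.comp (hA.comp e.symm.injective)

theorem exists_char_of_inj (ρ : Representation ℚ G M) (σ : Representation ℚ G N)
    (f : IntertwiningMap ρ σ) (hf : Function.Injective f) :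
    ∃ D : Subrepresentation σ, σ.character = ρ.character + D.toRepresentation.character := by
  obtain ⟨D, e', he'⟩ := exists_split σ f.range
  refine ⟨D, ?_⟩
  let φ : IntertwiningMap ρ f.range.toRepresentation :=
    ⟨f.toLinearMap.codRestrict f.range.toSubmodule (fun c => ⟨c, rfl⟩), by
        intro g
        ext c
        simp [Subrepresentation.toRepresentation]
        exact IntertwiningMap.isIntertwining ρ σ f g _⟩
  have hφ : ∀ c, (φ c : N) = f c := fun c => rfl
  have hφb : Function.Bijective φ := by
    constructor
    · intro a b hab
      exact hf (congrArg Subtype.val hab)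
    · rintro ⟨w, v, rfl⟩
      exact ⟨v, rfl⟩
  rw [← char_iso e', char_prod, char_iso (IntertwiningMap.ofBijective φ hφb)]

end Characters

theorem isSubrep_iff (X Y : FDRep ℚ G) :
    IsSubrep X Y ↔ ∃ f : IntertwiningMap X.ρ Y.ρ, Function.Injective f := by
  constructor
  · rintro ⟨f, hf⟩
    have : Mono ((forget₂ (FDRep ℚ G) (Rep ℚ G)).map f) := inferInstance
    rw [Rep.mono_iff_injective] at this
    exact ⟨((forget₂ (FDRep ℚ G) (Rep ℚ G)).map f).hom, this⟩
  · rintro ⟨f, hf⟩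
    let F : (forget₂ (FDRep ℚ G) (Rep ℚ G)).obj X ⟶ (forget₂ (FDRep ℚ G) (Rep ℚ G)).obj Y :=
      Rep.ofHom f
    have hF : Mono F := (Rep.mono_iff_injective F).2 hf
    obtain ⟨f', hf'⟩ := (forget₂ (FDRep ℚ G) (Rep ℚ G)).map_surjective F
    refine ⟨f', (forget₂ (FDRep ℚ G) (Rep ℚ G)).mono_of_mono_map ?_⟩
    rw [hf']
    exact hF

/-- The cone of characters. -/
def cone (G : Type) [Group G] [Fintype G] : AddSubmonoid (G → ℚ) where
  carrier := {χ | ∃ X : FDRep ℚ G, X.character = χ}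
  zero_mem' := ⟨FDRep.of (1 : Representation ℚ G PUnit), by
    ext g
    simp [FDRep.character]
    exact Module.finrank_zero_of_subsingleton⟩
  add_mem' := by
    rintro _ _ ⟨X, rfl⟩ ⟨Y, rfl⟩
    exact ⟨FDRep.of (Representation.prod X.ρ Y.ρ), char_prod X.ρ Y.ρ⟩

theorem cone_mul : ∀ x ∈ cone G, ∀ y ∈ cone G, x * y ∈ cone G := by
  rintro _ ⟨X, rfl⟩ _ ⟨Y, rfl⟩
  exact ⟨X ⊗ Y, FDRep.char_tensor X Y⟩

theorem isSubrep_iff_char (X Y : FDRep ℚ G) :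
    IsSubrep X Y ↔ Y.character - X.character ∈ cone G := by
  rw [isSubrep_iff]
  constructor
  · rintro ⟨f, hf⟩
    obtain ⟨D, hD⟩ := exists_char_of_inj _ _ f hf
    exact ⟨FDRep.of D.toRepresentation, (sub_eq_of_eq_add' hD).symm⟩
  · rintro ⟨Z, hZ⟩
    exact exists_inj_of_char X.ρ Y.ρ Z.ρ (eq_add_of_sub_eq' hZ.symm)

theorem char_gradedTensor (V W : ℕ → FDRep ℚ G) (m : ℕ) :
    (gradedTensor V W m).character
      = ∑ p ∈ Finset.range (m + 1), (V p).character * (W (m - p)).character := by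
  rw [Finset.sum_range (fun p => (V p).character * (W (m - p)).character)]
  refine (char_pi (fun p : Fin (m + 1) =>
    Representation.tprod (V p).ρ (W (m - (p : ℕ))).ρ)).trans ?_
  exact Finset.sum_congr rfl fun p _ => Representation.char_tensor _ _

end ELCAux

/-- If `V` and `W` are strongly equivariantly log concave graded representations of a
finite group `G`, then so is `V ⊗ W`. -/
theorem stmt5 (V W : ℕ → FDRep ℚ G) (hV : StrongELC V) (hW : StrongELC W) :
    StrongELC (gradedTensor V W) := by
  intro i j k l hij hjk hkl hs
  rw [ELCAux.isSubrep_iff_char, FDRep.char_tensor, FDRep.char_tensor]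
  refine ELCAux.conv_mem (ELCAux.cone G) ELCAux.cone_mul (fun n => (V n).character)
    (fun n => (W n).character) (fun n => (gradedTensor V W n).character)
    (fun n => ⟨_, rfl⟩) (fun n => ⟨_, rfl⟩) (ELCAux.char_gradedTensor V W) ?_ ?_
    i j k l hij hjk hkl hs
  · intro i j k l hij hjk hkl hs
    have := hV i j k l hij hjk hkl hs
    rwa [ELCAux.isSubrep_iff_char, FDRep.char_tensor, FDRep.char_tensor] at this
  · intro i j k l hij hjk hkl hs
    have := hW i j k l hij hjk hkl hs
    rwa [ELCAux.isSubrep_iff_char, FDRep.char_tensor, FDRep.char_tensor] at this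

end
end

section
/- If V and W are graded representations of a finite group Γ that are both strongly equivariantly log concave in degrees ≤ m, then V ⊗ W is strongly equivariantly log concave in degrees ≤ m. -/
open CategoryTheory MonoidalCategory

noncomputable section

variable {G : Type} [Group G] [Fintype G]

/-- A graded representation is strongly equivariantly log concave in degrees `≤ m` if
`V^i ⊗ V^l` is isomorphic to a subrepresentation of `V^j ⊗ V^k` whenever
`i ≤ j ≤ k ≤ l` and `j + k = i + l ≤ m`. -/
def StrongELCle (V : ℕ → FDRep ℚ G) (m : ℕ) : Prop :=
  ∀ i j k l : ℕ, i ≤ j → j ≤ k → k ≤ l → j + k = i + l → j + k ≤ m →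
    IsSubrep (V i ⊗ V l) (V j ⊗ V k)

section abstractPart

/-- A double sum lies in a subsemiring if its diagonal vanishes and its symmetrised off-diagonal
terms lie in the subsemiring. -/
theorem sum_sum_mem_of_symm {R : Type*} [CommRing R] (P : Subsemiring R) (F : ℕ → ℕ → R)
    (h0 : ∀ s, F s s = 0) (h1 : ∀ s t, s < t → F s t + F t s ∈ P) (n : ℕ) :
    ∑ s ∈ Finset.range n, ∑ t ∈ Finset.range n, F s t ∈ P := by
  induction n with
  | zero => simp [P.zero_mem]
  | succ n ih =>
    have : ∑ s ∈ Finset.range (n + 1), ∑ t ∈ Finset.range (n + 1), F s t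
        = ∑ s ∈ Finset.range n, ∑ t ∈ Finset.range n, F s t
          + ∑ s ∈ Finset.range n, (F s n + F n s) := by
      simp only [Finset.sum_range_succ, Finset.sum_add_distrib, h0]
      ring
    rw [this]
    exact P.add_mem ih (P.sum_mem fun s hs => h1 s n (Finset.mem_range.1 hs))

/-- Extension by zero to negative degrees. -/
def extZ {R : Type*} [CommRing R] (a : ℕ → R) (n : ℤ) : R := if 0 ≤ n then a n.toNat else 0

theorem extZ_neg {R : Type*} [CommRing R] (a : ℕ → R) {n : ℤ} (h : n < 0) : extZ a n = 0 := by
  simp [extZ, not_le.2 h]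

theorem extZ_natCast {R : Type*} [CommRing R] (a : ℕ → R) (n : ℕ) : extZ a (n : ℤ) = a n := by
  simp [extZ]

theorem extZ_mem {R : Type*} [CommRing R] (P : Subsemiring R) (a : ℕ → R) (ha : ∀ n, a n ∈ P)
    (n : ℤ) : extZ a n ∈ P := by
  unfold extZ
  split_ifs
  · exact ha _
  · exact P.zero_mem

/-- Strong log concavity in degrees `≤ m` relative to a cone. -/
def SLC {R : Type*} [CommRing R] (P : Subsemiring R) (a : ℕ → R) (m : ℕ) : Prop :=
  ∀ i j k l : ℕ, i ≤ j → j ≤ k → k ≤ l → j + k = i + l → j + k ≤ m →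
    a j * a k - a i * a l ∈ P

theorem extZ_minor {R : Type*} [CommRing R] (P : Subsemiring R) (a : ℕ → R) (ha : ∀ n, a n ∈ P)
    (m : ℕ) (h : SLC P a m) (x y z w : ℤ) (hx : z ≤ x) (hy : z ≤ y) (hs : x + y = z + w)
    (hm : x + y ≤ m) : extZ a x * extZ a y - extZ a z * extZ a w ∈ P := by
  rcases lt_or_ge z 0 with hz | hz
  · rw [extZ_neg a hz, zero_mul, sub_zero]
    exact P.mul_mem (extZ_mem P a ha x) (extZ_mem P a ha y)
  · lift z to ℕ using hz
    lift x to ℕ using by omega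
    lift y to ℕ using by omega
    lift w to ℕ using by omega
    simp only [extZ_natCast]
    rcases le_total x y with hxy | hxy
    · exact h z x y w (by omega) hxy (by omega) (by omega) (by omega)
    · rw [mul_comm (a x)]
      exact h z y x w (by omega) hxy (by omega) (by omega) (by omega)

theorem extZ_minor_zero {R : Type*} [CommRing R] (a : ℕ → R)
    (x y z w : ℤ) (hs : x + y = z + w)
    (hm : x + y < 0) : extZ a x * extZ a y - extZ a z * extZ a w = 0 := by
  have key : ∀ x y : ℤ, x + y < 0 → extZ a x * extZ a y = 0 := by
    intro x y h
    rcases lt_or_ge x 0 with hx | hx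
    · rw [extZ_neg a hx, zero_mul]
    · rw [extZ_neg a (show y < 0 by omega), mul_zero]
  rw [key x y hm, key z w (by omega), sub_zero]

theorem conv_eq {R : Type*} [CommRing R] (a b : ℕ → R) (r t N : ℕ) (hr : r < N) (n : ℕ)
    (hn : n + t = r) :
    ∑ p : Fin (n + 1), a p * b (n - (p : ℕ))
      = ∑ s ∈ Finset.range N, extZ a ((r : ℤ) - s) * extZ b ((s : ℤ) - t) := by
  rw [Fin.sum_univ_eq_sum_range (fun p => a p * b (n - p)) (n + 1)]
  symm
  apply Finset.sum_bij_ne_zero (fun s _ _ => r - s)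
  · intro s _ hs
    have h1 : t ≤ s := by
      by_contra hc
      exact hs (by rw [extZ_neg b (by omega), mul_zero])
    simp only [Finset.mem_range]
    omega
  · intro s _ hs s' _ hs' he
    have h1 : s ≤ r := by
      by_contra hc
      exact hs (by rw [extZ_neg a (by omega), zero_mul])
    have h2 : s' ≤ r := by
      by_contra hc
      exact hs' (by rw [extZ_neg a (by omega), zero_mul])
    omega
  · intro p hp hne
    have hp' := Finset.mem_range.1 hp
    have e1 : ((r : ℤ) - (r - p : ℕ)) = (p : ℤ) := by omega
    have e2 : (((r - p : ℕ) : ℤ) - t) = ((n - p : ℕ) : ℤ) := by omega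
    refine ⟨r - p, Finset.mem_range.2 (by omega), ?_, by omega⟩
    rw [e1, e2, extZ_natCast, extZ_natCast]
    exact hne
  · intro s _ hs
    have h1 : s ≤ r := by
      by_contra hc
      exact hs (by rw [extZ_neg a (by omega), zero_mul])
    have h2 : t ≤ s := by
      by_contra hc
      exact hs (by rw [extZ_neg b (by omega), mul_zero])
    have e1 : ((r : ℤ) - s) = ((r - s : ℕ) : ℤ) := by omega
    have e2 : ((s : ℤ) - t) = ((n - (r - s) : ℕ) : ℤ) := by omega
    rw [e1, e2, extZ_natCast, extZ_natCast]

theorem SLC_conv {R : Type*} [CommRing R] (P : Subsemiring R) (a b : ℕ → R)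
    (ha : ∀ n, a n ∈ P) (hb : ∀ n, b n ∈ P) (m : ℕ) (hA : SLC P a m) (hB : SLC P b m) :
    SLC P (fun n => ∑ p : Fin (n + 1), a p * b (n - (p : ℕ))) m := by
  intro i j k l hij hjk hkl hs hm
  obtain ⟨d, rfl⟩ := Nat.exists_eq_add_of_le hij
  obtain rfl : l = k + d := by omega
  simp only []
  rw [conv_eq a b (i + d) 0 (k + d + 1) (by omega) (i + d) (by omega),
    conv_eq a b (k + d) d (k + d + 1) (by omega) k (by omega),
    conv_eq a b (i + d) d (k + d + 1) (by omega) i (by omega),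
    conv_eq a b (k + d) 0 (k + d + 1) (by omega) (k + d) (by omega),
    Finset.sum_mul_sum, Finset.sum_mul_sum, ← Finset.sum_sub_distrib]
  simp only [← Finset.sum_sub_distrib]
  apply sum_sum_mem_of_symm P (fun s t =>
    extZ a (((i + d : ℕ) : ℤ) - s) * extZ b ((s : ℤ) - (0 : ℕ)) *
      (extZ a (((k + d : ℕ) : ℤ) - t) * extZ b ((t : ℤ) - d)) -
    extZ a (((i + d : ℕ) : ℤ) - s) * extZ b ((s : ℤ) - d) *
      (extZ a (((k + d : ℕ) : ℤ) - t) * extZ b ((t : ℤ) - (0 : ℕ))))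
  · intro s
    ring
  · intro s t hst
    have e : ∀ x1 x2 x3 x4 y1 y2 y3 y4 : R,
        (x1 * y1 * (x2 * y2) - x1 * y3 * (x2 * y4)) + (x3 * y4 * (x4 * y3) - x3 * y2 * (x4 * y1))
          = (x1 * x2 - x3 * x4) * (y1 * y2 - y3 * y4) := by
      intros; ring
    rw [e]
    by_cases hA' : ((i + d : ℕ) : ℤ) - s + (((k + d : ℕ) : ℤ) - t) < 0
    · rw [extZ_minor_zero a _ _ _ _ (by ring) hA', zero_mul]
      exact P.zero_mem
    by_cases hB' : (s : ℤ) - (0 : ℕ) + ((t : ℤ) - d) < 0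
    · rw [extZ_minor_zero b _ _ _ _ (by push_cast; ring) hB', mul_zero]
      exact P.zero_mem
    refine P.mul_mem (extZ_minor P a ha m hA _ _ _ _ ?_ ?_ ?_ ?_)
      (extZ_minor P b hb m hB _ _ _ _ ?_ ?_ ?_ ?_) <;> push_cast at * <;> omega

end abstractPart

section repPart

open Representation

theorem char_pi' {k H : Type*} [Field k] [Monoid H] {ι : Type*} [Fintype ι] [DecidableEq ι]
    {M : ι → Type*} [∀ i, AddCommGroup (M i)] [∀ i, Module k (M i)]
    [∀ i, FiniteDimensional k (M i)]
    (ρ : ∀ i, Representation k H (M i)) (g : H) :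
    LinearMap.trace k _ (Representation.pi' ρ g) = ∑ i, LinearMap.trace k _ (ρ i g) := by
  have : Representation.pi' ρ g
      = ∑ i, (LinearMap.single k M i) ∘ₗ ((ρ i g) ∘ₗ LinearMap.proj i) := by
    refine LinearMap.ext fun v => funext fun j => ?_
    simp only [LinearMap.sum_apply, LinearMap.comp_apply, Finset.sum_apply]
    rw [Finset.sum_eq_single j]
    · simp [Representation.pi']
    · intro b _ hb
      simp [Pi.single_eq_of_ne hb.symm]
    · simp
  rw [this, map_sum]
  refine Finset.sum_congr rfl fun i _ => ?_
  rw [LinearMap.trace_comp_comm']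
  congr 1
  ext v
  simp

variable {V W U : Type} [AddCommGroup V] [Module ℚ V] [FiniteDimensional ℚ V]
  [AddCommGroup W] [Module ℚ W] [FiniteDimensional ℚ W]
  [AddCommGroup U] [Module ℚ U] [FiniteDimensional ℚ U]

theorem char_prod' (ρ : Representation ℚ G V) (σ : Representation ℚ G W) :
    (ρ.prod σ).character = ρ.character + σ.character := by
  ext g
  exact LinearMap.trace_prodMap' (ρ g) (σ g)

theorem isCompl_toSubmodule (ρ : Representation ℚ G V) (A B : Subrepresentation ρ)
    (h : IsCompl A B) : IsCompl A.toSubmodule B.toSubmodule := by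
  constructor
  · rw [disjoint_iff, ← Subrepresentation.toSubmodule_inf, h.inf_eq_bot]
    rfl
  · rw [codisjoint_iff, ← Subrepresentation.toSubmodule_sup, h.sup_eq_top]
    rfl

theorem char_isCompl (ρ : Representation ℚ G V) (A B : Subrepresentation ρ)
    (h : IsCompl A.toSubmodule B.toSubmodule) :
    ρ.character = A.toRepresentation.character + B.toRepresentation.character := by
  rw [← char_prod']
  symm
  refine char_iso (Representation.Equiv.mk (Submodule.prodEquivOfIsCompl _ _ h) ?_)
  intro g
  refine LinearMap.ext fun v => ?_
  simp [Subrepresentation.toRepresentation]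

/-- The character of a representation is that of kernel plus that of range. -/
theorem char_ker_range (ρ : Representation ℚ G V) (σ : Representation ℚ G W)
    (f : IntertwiningMap ρ σ) :
    ρ.character = f.ker.toRepresentation.character + f.range.toRepresentation.character := by
  obtain ⟨K', hK⟩ := exists_isCompl f.ker
  have hK := isCompl_toSubmodule ρ _ _ hK
  rw [char_isCompl ρ _ _ hK]
  congr 1
  refine char_iso (Representation.Equiv.mk
    (LinearMap.kerComplementEquivRange f.toLinearMap hK.symm) ?_)
  intro g
  refine LinearMap.ext fun v => Subtype.ext ?_
  exact f.isIntertwining _ _ g v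

theorem exists_injective_of_char (n : ℕ) : ∀ {V W U : Type}
    [AddCommGroup V] [Module ℚ V] [FiniteDimensional ℚ V]
    [AddCommGroup W] [Module ℚ W] [FiniteDimensional ℚ W]
    [AddCommGroup U] [Module ℚ U] [FiniteDimensional ℚ U]
    (ρ : Representation ℚ G V) (σ : Representation ℚ G W) (τ : Representation ℚ G U),
    Module.finrank ℚ V = n → σ.character = ρ.character + τ.character →
    ∃ f : IntertwiningMap ρ σ, Function.Injective f := by
  induction n using Nat.strong_induction_on with
  | _ n ih =>
  intro V W U _ _ _ _ _ _ _ _ _ ρ σ τ hn hχ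
  rcases subsingleton_or_nontrivial V with hV | hV
  · exact ⟨0, Function.injective_of_subsingleton _⟩
  have : Invertible (Nat.card G : ℚ) := invertibleOfNonzero (by simp)
  have h1 := card_inv_mul_sum_char_mul_char_eq_finrank ρ σ
  have h2 := card_inv_mul_sum_char_mul_char_eq_finrank ρ ρ
  have h3 := card_inv_mul_sum_char_mul_char_eq_finrank ρ τ
  have h4 : Module.finrank ℚ (IntertwiningMap ρ σ)
      = Module.finrank ℚ (IntertwiningMap ρ ρ) + Module.finrank ℚ (IntertwiningMap ρ τ) := by
    have : (Module.finrank ℚ (IntertwiningMap ρ σ) : ℚ)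
      = Module.finrank ℚ (IntertwiningMap ρ ρ) + Module.finrank ℚ (IntertwiningMap ρ τ) := by
      rw [← h1, ← h2, ← h3, hχ, ← mul_add, ← Finset.sum_add_distrib]
      simp [add_mul]
    exact_mod_cast this
  have hfin : ∀ {X : Type} [AddCommGroup X] [Module ℚ X] [FiniteDimensional ℚ X]
      (π : Representation ℚ G X), FiniteDimensional ℚ (IntertwiningMap ρ π) := by
    intro X _ _ _ π
    exact Module.Finite.equiv (invariantsEquivIntertwiningMap ρ π)
  have := hfin ρ
  have := hfin σ
  have hne : Nontrivial (IntertwiningMap ρ ρ) := by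
    refine ⟨IntertwiningMap.id ρ, 0, fun h => ?_⟩
    obtain ⟨v, hv⟩ := exists_ne (0 : V)
    exact hv (by simpa using DFunLike.congr_fun h v)
  have hpos : 0 < Module.finrank ℚ (IntertwiningMap ρ ρ) := Module.finrank_pos
  have : Nontrivial (IntertwiningMap ρ σ) := Module.nontrivial_of_finrank_pos (R := ℚ) (by omega)
  obtain ⟨f, hf⟩ := exists_ne (0 : IntertwiningMap ρ σ)
  obtain ⟨K', hK⟩ := exists_isCompl f.ker
  have hK := isCompl_toSubmodule ρ _ _ hK
  obtain ⟨I', hI⟩ := exists_isCompl f.range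
  have hI := isCompl_toSubmodule σ _ _ hI
  have c1 := char_ker_range ρ σ f
  have c2 := char_isCompl σ _ _ hI
  have c3 : I'.toRepresentation.character = f.ker.toRepresentation.character + τ.character := by
    rw [c2, c1, add_comm _ (f.range.toRepresentation.character), add_assoc] at hχ
    exact add_left_cancel hχ
  have hlt : Module.finrank ℚ f.ker.toSubmodule < n := by
    rw [← hn]
    apply Submodule.finrank_lt
    intro htop
    apply hf
    ext v
    have : v ∈ f.ker.toSubmodule := by rw [htop]; trivial
    exact this
  obtain ⟨g, hg⟩ := ih _ hlt f.ker.toRepresentation I'.toRepresentation τ rfl c3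
  let p : V →ₗ[ℚ] f.ker.toSubmodule := Submodule.projectionOnto _ _ hK
  have hp : ∀ (x : G) (v : V), p (ρ x v) = f.ker.toRepresentation x (p v) := by
    intro x v
    obtain ⟨a, b, rfl⟩ : ∃ (a : f.ker.toSubmodule) (b : K'.toSubmodule), (a : V) + b = v := by
      obtain ⟨⟨a, b⟩, h⟩ := (Submodule.prodEquivOfIsCompl _ _ hK).surjective v
      exact ⟨a, b, by simpa using h⟩
    have ea : p a = a := Submodule.projectionOnto_apply_left hK a
    have eb : p b = 0 := Submodule.projectionOnto_apply_right hK b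
    have ea' : p (ρ x a) = f.ker.toRepresentation x a :=
      Submodule.projectionOnto_apply_left hK (f.ker.toRepresentation x a)
    have eb' : p (ρ x b) = 0 :=
      Submodule.projectionOnto_apply_right hK (K'.toRepresentation x b)
    rw [map_add, map_add, map_add, ea, eb, ea', eb', add_zero, add_zero]
  let h : V →ₗ[ℚ] W := I'.toSubmodule.subtype ∘ₗ g.toLinearMap ∘ₗ p + f.toLinearMap
  have happ : ∀ v, h v = (g (p v) : W) + f v := fun v => rfl
  refine ⟨⟨h, fun x => ?_⟩, ?_⟩
  · refine LinearMap.ext fun v => ?_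
    change h (ρ x v) = σ x (h v)
    rw [happ, happ, hp, g.isIntertwining, f.isIntertwining, map_add]
    rfl
  · change Function.Injective h
    rw [injective_iff_map_eq_zero]
    intro v hv
    rw [happ] at hv
    have m1 : f v ∈ f.range.toSubmodule := ⟨v, rfl⟩
    have m2 : f v ∈ I'.toSubmodule := by
      rw [eq_neg_of_add_eq_zero_right hv]
      exact neg_mem (g (p v)).2
    have z1 : f v = 0 := Submodule.disjoint_def.1 hI.disjoint _ m1 m2
    rw [z1, add_zero] at hv
    have z2 : g (p v) = 0 := Subtype.ext hv
    have z3 : p v = 0 := hg (by rw [z2, map_zero])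
    have m3 : v ∈ K'.toSubmodule := (Submodule.projectionOnto_apply_eq_zero_iff hK).1 z3
    exact Submodule.disjoint_def.1 hK.disjoint v z1 m3

/-- The cone of characters of representations. -/
def charCone (G : Type) [Group G] : Subsemiring (G → ℚ) where
  carrier := {χ | ∃ X : FDRep ℚ G, X.character = χ}
  zero_mem' := ⟨FDRep.of (Representation.trivial ℚ G PUnit), by
    ext g
    change LinearMap.trace ℚ PUnit (Representation.trivial ℚ G PUnit g) = 0
    rw [Subsingleton.elim (Representation.trivial ℚ G PUnit g) 0, map_zero]⟩
  one_mem' := ⟨FDRep.of (Representation.trivial ℚ G ℚ), by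
    ext g
    exact (LinearMap.trace_id ℚ ℚ).trans (by simp)⟩
  add_mem' := by
    rintro _ _ ⟨X, rfl⟩ ⟨Y, rfl⟩
    refine ⟨FDRep.of (Representation.prod X.ρ Y.ρ), ?_⟩
    ext g
    exact LinearMap.trace_prodMap' (X.ρ g) (Y.ρ g)
  mul_mem' := by
    rintro _ _ ⟨X, rfl⟩ ⟨Y, rfl⟩
    exact ⟨X ⊗ Y, FDRep.char_tensor X Y⟩

theorem isSubrep_iff (X Y : FDRep ℚ G) :
    IsSubrep X Y ↔ Y.character - X.character ∈ charCone G := by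
  constructor
  · rintro ⟨f, hf⟩
    have hm : Mono ((forget₂ (FDRep ℚ G) (Rep ℚ G)).map f) := inferInstance
    have hinj := (Rep.mono_iff_injective _).1 hm
    let φ : IntertwiningMap (V := X) (W := Y) X.ρ Y.ρ :=
      ((forget₂ (FDRep ℚ G) (Rep ℚ G)).map f).hom
    have hφ : Function.Injective φ := hinj
    obtain ⟨I', hI⟩ := exists_isCompl φ.range
    have hI := isCompl_toSubmodule (V := Y) Y.ρ _ _ hI
    have c1 := char_isCompl (V := Y) Y.ρ _ _ hI
    have c2 : Representation.character (V := X) X.ρ = φ.range.toRepresentation.character := by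
      refine char_iso (Representation.Equiv.mk (LinearEquiv.ofInjective φ.toLinearMap hφ) ?_)
      intro g
      refine LinearMap.ext fun v => Subtype.ext ?_
      exact φ.isIntertwining _ _ g v
    refine ⟨FDRep.of I'.toRepresentation, ?_⟩
    change I'.toRepresentation.character = Representation.character (V := Y) Y.ρ
      - Representation.character (V := X) X.ρ
    rw [c1, c2, add_sub_cancel_left]
  · rintro ⟨Z, hZ⟩
    have h : Y.character = X.character + Z.character := by rw [hZ]; ring
    obtain ⟨f, hf⟩ := exists_injective_of_char _ (V := X) (W := Y) (U := Z) X.ρ Y.ρ Z.ρ rfl h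
    let F : (forget₂ (FDRep ℚ G) (Rep ℚ G)).obj X ⟶ (forget₂ (FDRep ℚ G) (Rep ℚ G)).obj Y :=
      Rep.ofHom f
    have hF : Mono F := (Rep.mono_iff_injective F).2 hf
    refine ⟨(forget₂ (FDRep ℚ G) (Rep ℚ G)).preimage F, ?_⟩
    apply (forget₂ (FDRep ℚ G) (Rep ℚ G)).mono_of_mono_map
    rw [Functor.map_preimage]
    exact hF

theorem strongELCle_iff (V : ℕ → FDRep ℚ G) (m : ℕ) :
    StrongELCle V m ↔ SLC (charCone G) (fun n => (V n).character) m := by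
  simp only [StrongELCle, SLC, isSubrep_iff, FDRep.char_tensor]

theorem char_gradedTensor (V W : ℕ → FDRep ℚ G) (n : ℕ) :
    (gradedTensor V W n).character
      = ∑ p : Fin (n + 1), (V p).character * (W (n - (p : ℕ))).character := by
  ext g
  refine (char_pi' (fun p : Fin (n + 1) =>
    Representation.tprod (V p).ρ (W (n - (p : ℕ))).ρ) g).trans ?_
  rw [Finset.sum_apply]
  refine Finset.sum_congr rfl fun p _ => ?_
  exact LinearMap.trace_tensorProduct' ((V p).ρ g) ((W (n - (p : ℕ))).ρ g)

end repPart

/-- If `V` and `W` are graded representations of a finite group `G` that are both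
strongly equivariantly log concave in degrees `≤ m`, then so is `V ⊗ W`. -/
theorem stmt6 (m : ℕ) (V W : ℕ → FDRep ℚ G) (hV : StrongELCle V m) (hW : StrongELCle W m) :
    StrongELCle (gradedTensor V W) m := by
  rw [strongELCle_iff] at *
  simp only [char_gradedTensor]
  exact SLC_conv (charCone G) _ _ (fun n => ⟨V n, rfl⟩) (fun n => ⟨W n, rfl⟩) m hV hW

end
end

section
/- Let A(M) = E/I be the Orlik–Solomon-type presentation of the cohomology of the configuration space Conf(n, ℂ): the exterior algebra over ℚ on generators x_{ij} for distinct i, j ∈ [n], modulo the relations x_{ij} − x_{ji} and x_{ij}x_{jk} + x_{jk}x_{ki} + x_{ki}x_{ij} for distinct i, j, k. Then the subalgebra B generated by differences x_{ij} − x_{kl} of the generators, together with the element t = Σ_{i≠j} x_{ij}, satisfies A ≅ B ⊗ Λ[t] as graded vector spaces; in particular dim A^i = dim B^i + dim B^{i−1}. -/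
noncomputable section

/-- Ordered pairs of distinct elements of `Fin n`, indexing the generators `x_{ij}`. -/
abbrev Pairs (n : ℕ) := {p : Fin n × Fin n // p.1 ≠ p.2}

/-- The exterior algebra `E` over `ℚ` on generators `x_{ij}`, `i ≠ j ∈ [n]`. -/
abbrev Ealg (n : ℕ) := ExteriorAlgebra ℚ (Pairs n → ℚ)

/-- The generator `x_{ij}` of the exterior algebra. -/
def xGen (n : ℕ) (p : Pairs n) : Ealg n := ExteriorAlgebra.ι ℚ (Pi.single p 1)

/-- The Orlik–Solomon relations: `x_{ij} = x_{ji}` and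
`x_{ij}x_{jk} + x_{jk}x_{ki} + x_{ki}x_{ij} = 0` for distinct `i, j, k`. -/
inductive relA (n : ℕ) : Ealg n → Ealg n → Prop
  | sym (i j : Fin n) (h : i ≠ j) : relA n (xGen n ⟨(i, j), h⟩) (xGen n ⟨(j, i), h.symm⟩)
  | arnold (i j k : Fin n) (hij : i ≠ j) (hjk : j ≠ k) (hki : k ≠ i) :
      relA n (xGen n ⟨(i, j), hij⟩ * xGen n ⟨(j, k), hjk⟩ +
              xGen n ⟨(j, k), hjk⟩ * xGen n ⟨(k, i), hki⟩ +
              xGen n ⟨(k, i), hki⟩ * xGen n ⟨(i, j), hij⟩) 0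

/-- The Orlik–Solomon algebra `A = E/I` of `Conf(n, ℂ)`. -/
abbrev Aring (n : ℕ) := RingQuot (relA n)

/-- The quotient map `E → A`. -/
def mkA (n : ℕ) : Ealg n →ₐ[ℚ] Aring n := RingQuot.mkAlgHom ℚ (relA n)

/-- The degree-`i` piece of the exterior algebra. -/
def Edeg (n i : ℕ) : Submodule ℚ (Ealg n) :=
  LinearMap.range (ExteriorAlgebra.ι ℚ : (Pairs n → ℚ) →ₗ[ℚ] Ealg n) ^ i

/-- The degree-`i` piece `A^i` of `A`, the image of the degree-`i` part of `E`. -/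
def Adeg (n i : ℕ) : Submodule ℚ (Aring n) := (Edeg n i).map (mkA n).toLinearMap

/-- The reduced Orlik–Solomon algebra `B`, the subalgebra of `A` generated by the
differences `x_{ij} - x_{kl}` of the generators. -/
def Bsub (n : ℕ) : Subalgebra ℚ (Aring n) :=
  Algebra.adjoin ℚ {a | ∃ p q : Pairs n, a = mkA n (xGen n p) - mkA n (xGen n q)}

/-- The degree-`k` piece `B^k := B ∩ A^k` (zero in negative degrees). -/
def Bdeg (n : ℕ) (k : ℤ) : Submodule ℚ (Aring n) :=
  if 0 ≤ k then (Bsub n).toSubmodule ⊓ Adeg n k.toNat else ⊥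

/-- The element `t = Σ_{i ≠ j} x_{ij}` of `A`. -/
def tEl (n : ℕ) : Aring n := mkA n (∑ p : Pairs n, xGen n p)

/-- The image in `A` of a linear form. -/
def ptl (n : ℕ) : (Pairs n → ℚ) →ₗ[ℚ] Aring n :=
  (mkA n).toLinearMap ∘ₗ (ExteriorAlgebra.ι ℚ)

lemma ptl_apply (n : ℕ) (v : Pairs n → ℚ) : ptl n v = mkA n (ExteriorAlgebra.ι ℚ v) := rfl

lemma ptl_sq (n : ℕ) (v : Pairs n → ℚ) : ptl n v * ptl n v = 0 := by
  rw [ptl_apply, ← map_mul, ExteriorAlgebra.ι_sq_zero, map_zero]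

lemma ptl_swap (n : ℕ) (v w : Pairs n → ℚ) : ptl n v * ptl n w = - (ptl n w * ptl n v) := by
  rw [eq_neg_iff_add_eq_zero]
  simp only [ptl_apply]
  rw [← map_mul (mkA n), ← map_mul (mkA n), ← map_add (mkA n), ExteriorAlgebra.ι_add_mul_swap,
    map_zero]

lemma Adeg_eq (n i : ℕ) : Adeg n i = (LinearMap.range (ptl n)) ^ i := by
  unfold Adeg Edeg ptl
  rw [Submodule.map_pow, LinearMap.range_comp]

lemma tEl_eq (n : ℕ) : tEl n = ptl n (fun _ => 1) := by
  unfold tEl xGen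
  rw [ptl_apply, ← map_sum]
  congr 2
  ext p
  simp [Finset.sum_apply, Pi.single_apply]

/-- Sum of coordinates. -/
def sumc (n : ℕ) : (Pairs n → ℚ) →ₗ[ℚ] ℚ := ∑ p, LinearMap.proj p

lemma sumc_apply (n : ℕ) (v : Pairs n → ℚ) : sumc n v = ∑ p, v p := by
  simp [sumc]

/-- The derivation matrix on degree one. -/
def dOne (n : ℕ) : (Pairs n → ℚ) →ₗ[ℚ] Matrix (Fin 2) (Fin 2) (Aring n) where
  toFun v := !![- ptl n v, algebraMap ℚ _ (sumc n v); 0, ptl n v]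
  map_add' v w := by
    ext a b; fin_cases a <;> fin_cases b <;> simp [add_comm]
  map_smul' c v := by
    ext a b; fin_cases a <;> fin_cases b <;> simp [map_smul]
    rw [Algebra.smul_def]

lemma dOne_apply (n : ℕ) (v : Pairs n → ℚ) :
    dOne n v = !![- ptl n v, algebraMap ℚ _ (sumc n v); 0, ptl n v] := rfl

/-- The derivation as an algebra map on `E`. -/
def dE (n : ℕ) : Ealg n →ₐ[ℚ] Matrix (Fin 2) (Fin 2) (Aring n) :=
  ExteriorAlgebra.lift ℚ ⟨dOne n, fun v => by
    rw [dOne_apply, Matrix.mul_fin_two]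
    ext a b
    fin_cases a <;> fin_cases b <;> simp [ptl_sq, Algebra.commutes]⟩

lemma dE_ι (n : ℕ) (v : Pairs n → ℚ) : dE n (ExteriorAlgebra.ι ℚ v) = dOne n v := by
  simp [dE]

lemma dE_x (n : ℕ) (p : Pairs n) :
    dE n (xGen n p) = !![- mkA n (xGen n p), 1; 0, mkA n (xGen n p)] := by
  rw [xGen, dE_ι, dOne_apply, sumc_apply]
  simp [ptl_apply]

/-- The derivation as an algebra map on `A`. -/
def dA (n : ℕ) : Aring n →ₐ[ℚ] Matrix (Fin 2) (Fin 2) (Aring n) :=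
  RingQuot.liftAlgHom ℚ ⟨dE n, fun x y h => by
    have hr := RingQuot.mkAlgHom_rel ℚ h
    induction h with
    | sym i j h =>
      change mkA n _ = mkA n _ at hr
      rw [dE_x, dE_x, hr]
    | arnold i j k hij hjk hki =>
      change mkA n _ = mkA n _ at hr
      simp only [map_add, map_mul, map_zero] at hr
      simp only [map_add, map_mul, map_zero, dE_x, Matrix.mul_fin_two]
      ext a b
      fin_cases a <;> fin_cases b <;> simp [hr]⟩

lemma dA_ptl (n : ℕ) (v : Pairs n → ℚ) :
    dA n (ptl n v) = !![- ptl n v, algebraMap ℚ _ (sumc n v); 0, ptl n v] := by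
  rw [← dOne_apply, ← dE_ι, ptl_apply, dA, mkA, RingQuot.liftAlgHom_mkAlgHom_apply]

lemma dA_deg (n i : ℕ) (a : Aring n) (ha : a ∈ Adeg n i) :
    dA n a 0 0 = (-1) ^ i * a ∧ dA n a 1 0 = 0 ∧ dA n a 1 1 = a := by
  rw [Adeg_eq] at ha
  induction ha using Submodule.pow_induction_on_left' with
  | algebraMap r =>
    rw [AlgHom.commutes]
    simp [Matrix.algebraMap_matrix_apply]
  | add x y i hx hy h1 h2 =>
    rw [map_add]
    simp only [Matrix.add_apply]
    rw [h1.1, h1.2.1, h1.2.2, h2.1, h2.2.1, h2.2.2]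
    simp [mul_add]
  | mem_mul m hm i x hx h =>
    obtain ⟨v, rfl⟩ := hm
    rw [map_mul, dA_ptl]
    simp only [Matrix.mul_apply, Fin.sum_univ_two]
    rw [h.1, h.2.1, h.2.2]
    have hc : ptl n v * (-1) ^ i = (-1) ^ i * ptl n v :=
      ((Commute.neg_one_right (ptl n v)).pow_right i).eq
    simp [pow_succ, ← mul_assoc, hc]

lemma dA_B (n : ℕ) (b : Aring n) (hb : b ∈ Bsub n) :
    dA n b 0 1 = 0 := by
  unfold Bsub at hb
  have : dA n b 0 1 = 0 ∧ dA n b 1 0 = 0 := by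
    induction hb using Algebra.adjoin_induction with
    | mem x hx =>
      obtain ⟨p, q, rfl⟩ := hx
      have h (p) : mkA n (xGen n p) = ptl n (Pi.single p 1) := rfl
      rw [h, h, map_sub, dA_ptl, dA_ptl]
      simp [sumc_apply]
    | algebraMap r =>
      rw [AlgHom.commutes]
      simp [Matrix.algebraMap_matrix_apply]
    | add x y _ _ h1 h2 =>
      rw [map_add]
      simp only [Matrix.add_apply]
      rw [h1.1, h1.2, h2.1, h2.2]; simp
    | mul x y _ _ h1 h2 =>
      rw [map_mul]
      simp only [Matrix.mul_apply, Fin.sum_univ_two]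
      rw [h1.1, h1.2, h2.1, h2.2]; simp
  exact this.1

lemma sumc_one_ne (n : ℕ) (hn : 2 ≤ n) : sumc n (fun _ => 1) ≠ 0 := by
  rw [sumc_apply]
  have : Nonempty (Pairs n) := ⟨⟨(⟨0, by omega⟩, ⟨1, by omega⟩), by simp⟩⟩
  rw [Finset.sum_const, Finset.card_univ, nsmul_eq_mul, mul_one]
  exact Nat.cast_ne_zero.mpr Fintype.card_ne_zero

lemma inj_aux (n : ℕ) (hn : 2 ≤ n) (k : ℕ) (b c : Aring n) (hb : b ∈ Bsub n) (hc : c ∈ Bsub n)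
    (hck : c ∈ Adeg n k) (h : b + c * tEl n = 0) : b = 0 ∧ c = 0 := by
  have h1 : dA n (b + c * tEl n) 0 1 = 0 := by rw [h, map_zero]; rfl
  rw [map_add, map_mul, tEl_eq, dA_ptl] at h1
  simp only [Matrix.add_apply, Matrix.mul_apply, Fin.sum_univ_two] at h1
  rw [dA_B n b hb, dA_B n c hc, (dA_deg n k c hck).1] at h1
  have hc0 : c = 0 := by
    simp only [Matrix.of_apply, Matrix.cons_val', Matrix.cons_val_zero, Matrix.cons_val_one,
      Matrix.cons_val_fin_one, zero_mul, add_zero, zero_add] at h1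
    rw [← Algebra.commutes, ← Algebra.smul_def] at h1
    have h2 := (smul_eq_zero.mp h1).resolve_left (sumc_one_ne n hn)
    rcases neg_one_pow_eq_or (Aring n) k with e | e <;> rw [e] at h2 <;> simpa using h2
  subst hc0
  simpa using h

lemma split_one (n : ℕ) (hn : 2 ≤ n) (v : Pairs n → ℚ) :
    ∃ w : Pairs n → ℚ, ∃ s : ℚ, ptl n w ∈ Bsub n ∧ ptl n v = ptl n w + s • tEl n := by
  set N : ℚ := sumc n (fun _ => 1) with hN
  have hN0 : N ≠ 0 := sumc_one_ne n hn
  refine ⟨v - (N⁻¹ * sumc n v) • (fun _ => 1), N⁻¹ * sumc n v, ?_, ?_⟩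
  · have key : v - (N⁻¹ * sumc n v) • (fun _ => (1 : ℚ)) =
        N⁻¹ • ∑ p, ∑ q, v p • (Pi.single p 1 - Pi.single q 1 : Pairs n → ℚ) := by
      have hN' : N = (Fintype.card (Pairs n) : ℚ) := by simp [hN, sumc_apply]
      ext r
      simp only [Pi.sub_apply, Pi.smul_apply, Finset.sum_apply, smul_eq_mul, mul_sub,
        Finset.sum_sub_distrib, Finset.sum_const, Finset.card_univ, nsmul_eq_mul, ← hN',
        Pi.single_apply, mul_ite, mul_one, mul_zero, sumc_apply]
      simp [hN0]
    rw [key, map_smul]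
    refine Subalgebra.smul_mem _ ?_ _
    simp only [map_sum, map_smul]
    refine Subalgebra.sum_mem _ fun p _ => Subalgebra.sum_mem _ fun q _ =>
      Subalgebra.smul_mem _ ?_ _
    refine Algebra.subset_adjoin ⟨p, q, ?_⟩
    rw [map_sub]; rfl
  · rw [tEl_eq, map_sub, map_smul, sub_add_cancel]

lemma Bdeg_nat (n i : ℕ) : Bdeg n (i : ℤ) = (Bsub n).toSubmodule ⊓ Adeg n i := by
  simp [Bdeg]

lemma Bdeg_succ (n i : ℕ) : Bdeg n (((i + 1 : ℕ) : ℤ) - 1) = (Bsub n).toSubmodule ⊓ Adeg n i := by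
  rw [← Bdeg_nat]; congr 1; push_cast; ring

lemma Bdeg_zero_sub (n : ℕ) : Bdeg n (((0 : ℕ) : ℤ) - 1) = ⊥ := by
  simp [Bdeg]

lemma Adeg_mul (n i : ℕ) (a : Aring n) (ha : a ∈ Adeg n i) (v : Pairs n → ℚ) :
    a * ptl n v ∈ Adeg n (i + 1) := by
  rw [Adeg_eq] at *
  rw [pow_succ]
  exact Submodule.mul_mem_mul ha ⟨v, rfl⟩

lemma surj_aux (n : ℕ) (hn : 2 ≤ n) (i : ℕ) (a : Aring n) (ha : a ∈ Adeg n i) :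
    ∃ b ∈ Bdeg n i, ∃ c ∈ Bdeg n ((i : ℤ) - 1), a = b + c * tEl n := by
  rw [Adeg_eq] at ha
  induction ha using Submodule.pow_induction_on_right' with
  | algebraMap r =>
    refine ⟨algebraMap ℚ _ r, ?_, 0, Submodule.zero_mem _, by simp⟩
    rw [Bdeg_nat, Adeg_eq, pow_zero]
    exact ⟨Subalgebra.algebraMap_mem _ _, Submodule.algebraMap_mem _⟩
  | add x y i hx hy h1 h2 =>
    obtain ⟨b, hb, c, hc, rfl⟩ := h1
    obtain ⟨b', hb', c', hc', rfl⟩ := h2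
    exact ⟨b + b', add_mem hb hb', c + c', add_mem hc hc', by rw [add_mul]; abel⟩
  | mul_mem i x hx h m hm =>
    obtain ⟨b, hb, c, hc, rfl⟩ := h
    obtain ⟨v, rfl⟩ := hm
    obtain ⟨w, s, hw, hv⟩ := split_one n hn v
    rw [Bdeg_nat] at hb
    have hcw : c ∈ Bsub n ∧ c * ptl n w ∈ Adeg n i := by
      cases i with
      | zero =>
        rw [Bdeg_zero_sub, Submodule.mem_bot] at hc
        subst hc
        simp
      | succ j =>
        rw [Bdeg_succ] at hc
        exact ⟨hc.1, Adeg_mul n j c hc.2 w⟩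
    refine ⟨b * ptl n w, ?_, s • b - c * ptl n w, ?_, ?_⟩
    · rw [Bdeg_nat]
      exact ⟨mul_mem (S := Subalgebra ℚ (Aring n)) hb.1 hw, Adeg_mul n i b hb.2 w⟩
    · rw [Bdeg_succ]
      refine sub_mem (Submodule.smul_mem _ _ hb) ⟨?_, hcw.2⟩
      exact mul_mem (S := Subalgebra ℚ (Aring n)) hcw.1 hw
    · have e1 : tEl n * ptl n w = - (ptl n w * tEl n) := by rw [tEl_eq, ptl_swap]
      have e2 : tEl n * tEl n = 0 := by rw [tEl_eq, ptl_sq]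
      rw [hv, add_mul, mul_add, mul_add, mul_assoc c, mul_assoc c, e1, mul_smul_comm,
        mul_smul_comm, e2, sub_mul, smul_mul_assoc, mul_assoc c]
      simp only [smul_zero, mul_zero, mul_neg]
      abel

lemma Adeg_finite (n i : ℕ) : Module.Finite ℚ (Adeg n i) := by
  rw [Module.Finite.iff_fg, Adeg_eq]
  refine Submodule.FG.pow ?_ i
  rw [LinearMap.range_eq_map]
  exact Submodule.FG.map _ Module.Finite.fg_top

/-- With `B ⊆ A` the reduced Orlik–Solomon subalgebra and `t = Σ_{i≠j} x_{ij}`, the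
multiplication map `B^i × B^{i-1} → A`, `(b, c) ↦ b + c·t`, is injective with image
`A^i`; thus `A ≅ B ⊗ Λ[t]` as graded vector spaces and in particular
`dim A^i = dim B^i + dim B^{i-1}`. -/
theorem stmt15 (n : ℕ) (hn : 2 ≤ n) (i : ℕ) :
    Function.Injective
      (fun bc : Bdeg n i × Bdeg n ((i : ℤ) - 1) =>
        (bc.1.1 : Aring n) + bc.2.1 * tEl n) ∧
    Set.range
      (fun bc : Bdeg n i × Bdeg n ((i : ℤ) - 1) =>
        (bc.1.1 : Aring n) + bc.2.1 * tEl n) = (Adeg n i : Set (Aring n)) ∧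
    Module.finrank ℚ (Adeg n i) =
      Module.finrank ℚ (Bdeg n i) + Module.finrank ℚ (Bdeg n ((i : ℤ) - 1)) := by
  set f : (Bdeg n i × Bdeg n ((i : ℤ) - 1)) →ₗ[ℚ] Aring n :=
    (Bdeg n i).subtype.coprod
      ((LinearMap.mulRight ℚ (tEl n)) ∘ₗ (Bdeg n ((i : ℤ) - 1)).subtype) with hf
  have hfun : (fun bc : Bdeg n i × Bdeg n ((i : ℤ) - 1) =>
        (bc.1.1 : Aring n) + bc.2.1 * tEl n) = f := by
    funext bc; simp [hf]
  have hBA : Bdeg n i ≤ Adeg n i := by rw [Bdeg_nat]; exact inf_le_right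
  have hinj : Function.Injective f := by
    rw [← LinearMap.ker_eq_bot, LinearMap.ker_eq_bot']
    rintro ⟨⟨b, hb⟩, ⟨c, hc⟩⟩ h
    rw [← hfun] at h
    change b + c * tEl n = 0 at h
    have hb' := hb
    rw [Bdeg_nat] at hb'
    have : b = 0 ∧ c = 0 := by
      cases i with
      | zero =>
        have hc' := hc
        rw [Bdeg_zero_sub, Submodule.mem_bot] at hc'
        subst hc'
        simpa using h
      | succ j =>
        have hc' := hc
        rw [Bdeg_succ] at hc'
        exact inj_aux n hn j b c hb'.1 hc'.1 hc'.2 h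
    obtain ⟨rfl, rfl⟩ := this
    rfl
  have hct : ∀ c ∈ Bdeg n ((i : ℤ) - 1), c * tEl n ∈ Adeg n i := by
    intro c hc
    cases i with
    | zero =>
      rw [Bdeg_zero_sub, Submodule.mem_bot] at hc
      subst hc
      simp
    | succ j =>
      rw [Bdeg_succ] at hc
      rw [tEl_eq]
      exact Adeg_mul n j c hc.2 _
  have hrange : LinearMap.range f = Adeg n i := by
    apply le_antisymm
    · rintro _ ⟨⟨⟨b, hb⟩, ⟨c, hc⟩⟩, rfl⟩
      rw [← hfun]
      exact add_mem (hBA hb) (hct c hc)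
    · intro a ha
      obtain ⟨b, hb, c, hc, rfl⟩ := surj_aux n hn i a ha
      refine ⟨⟨⟨b, hb⟩, ⟨c, hc⟩⟩, ?_⟩
      rw [← hfun]
  have hfin := Adeg_finite n i
  have h1 : Module.Finite ℚ (Bdeg n i) := Submodule.finiteDimensional_of_le hBA
  have h2 : Module.Finite ℚ (Bdeg n ((i : ℤ) - 1)) := by
    cases i with
    | zero => rw [Bdeg_zero_sub]; infer_instance
    | succ j =>
      have := Adeg_finite n j
      rw [Bdeg_succ]
      exact Submodule.finiteDimensional_of_le (inf_le_right (b := Adeg n j))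
  rw [hfun]
  refine ⟨hinj, ?_, ?_⟩
  · rw [← hrange]; rfl
  · rw [← hrange, LinearMap.finrank_range_of_inj hinj, Module.finrank_prod]

end
end
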